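/- Let E and F be Banach spaces, U ⊆ E × ℝ open, (x₀, 0) ∈ U, r ≥ 1 an integer, and let f₁, f₂ : U → F be C^(r+1) maps with f₁(x, 0) = f₂(x, 0) for all (x, 0) ∈ U. Suppose that f₂ = f₁ + O(t^r) at every point (x, 0) near (x₀, 0) and that the r-residual vanishes on the slice, i.e. ∂^r/∂t^r (f₂ − f₁)(x, 0) = 0 for all x in a neighborhood of x₀. Then f₂ = f₁ + O(t^(r+1)) at (x₀, 0), i.e. there is a function δ, defined near (x₀, 0) and continuous at (x₀, 0), with f₂(x,t) − f₁(x,t) = t^(r+1) · δ(x,t). -/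

import Mathlib

/-!
Write `g = f₂ - f₁`. The heart of the proof is the Taylor expansion with parameter
(`isLittleO_of_slice_deriv_zero`): if `g` is `C^n` and its `t`-derivatives of order `< n` vanish
on the slice `t = 0` near `x₀`, then `g (x, t) = t^n / n! • c + o(t^n)` as `(x, t) → (x₀, 0)`,
where `c = ∂ⁿg/∂tⁿ (x₀, 0)`. It follows from iterating the mean value inequality in `t`, uniformly
in `x`, and from the joint continuity of `∂ⁿg/∂tⁿ`.

The expansion is used twice. Applied successively to each `k < r` at each point near `x₀`, and
compared with `g = O(t^r)`, it shows that all `t`-derivatives of order `< r` vanish on the slice;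
order `r` is the residual hypothesis. Applied with `n = r + 1` at `x₀`, it shows that
`g (x, t) / t^(r+1)` extends continuously to `(x₀, 0)` by the value `c / (r+1)!`.
-/

open scoped Topology

open Filter Asymptotics

/-- A quantitative Taylor estimate at `0`, obtained by iterating the mean value inequality. The
bound does not depend on the function, so it is uniform over families. -/
lemma norm_sub_taylor_le {F : Type*} [NormedAddCommGroup F] [NormedSpace ℝ F]
    (n : ℕ) {ρ ε : ℝ} (c : F) (φ : ℝ → F)
    (hφ : ContDiffOn ℝ n φ (Set.Ioo (-ρ) ρ))
    (h0 : ∀ k < n, iteratedDeriv k φ 0 = 0)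
    (hn : ∀ s ∈ Set.Ioo (-ρ) ρ, ‖iteratedDeriv n φ s - c‖ ≤ ε) :
    ∀ t ∈ Set.Ioo (-ρ) ρ, ‖φ t - (t ^ n / n.factorial) • c‖ ≤ ε * |t| ^ n := by
  induction n generalizing φ with
  | zero => intro t ht; simpa using hn t ht
  | succ n ih =>
    intro t ht
    have hd : ContDiffOn ℝ n (deriv φ) (Set.Ioo (-ρ) ρ) :=
      hφ.deriv_of_isOpen isOpen_Ioo (by push_cast; rfl)
    have key := ih (deriv φ) hd
      (fun k hk => by
        have := h0 (k + 1) (by omega)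
        rwa [iteratedDeriv_succ'] at this)
      (fun s hs => by
        have := hn s hs
        rwa [iteratedDeriv_succ'] at this)
    have hε : 0 ≤ ε := (norm_nonneg _).trans (hn t ht)
    have hsub : ∀ s ∈ Set.uIcc 0 t, s ∈ Set.Ioo (-ρ) ρ ∧ |s| ≤ |t| := by
      intro s hs
      have h1 : |s| ≤ |t| := by
        have := Set.abs_sub_left_of_mem_uIcc hs
        simpa using this
      exact ⟨abs_lt.mp (h1.trans_lt (abs_lt.mpr ht)), h1⟩
    have hder : ∀ s ∈ Set.uIcc 0 t,
        HasDerivWithinAt (fun s => φ s - (s ^ (n + 1) / (n + 1).factorial) • c)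
          (deriv φ s - (s ^ n / n.factorial) • c) (Set.uIcc 0 t) s := by
      intro s hs
      have h1 : HasDerivAt φ (deriv φ s) s :=
        ((hφ.differentiableOn (by simp)).differentiableAt
          (isOpen_Ioo.mem_nhds (hsub s hs).1)).hasDerivAt
      have h2 : HasDerivAt (fun s : ℝ => s ^ (n + 1) / ((n + 1).factorial : ℝ))
          (s ^ n / n.factorial) s := by
        refine ((hasDerivAt_pow (n + 1) s).div_const _).congr_deriv ?_
        rw [Nat.factorial_succ]
        push_cast
        have : (n.factorial : ℝ) ≠ 0 := by positivity
        have : (n : ℝ) + 1 ≠ 0 := by positivity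
        field_simp
      exact (h1.sub (h2.smul_const c)).hasDerivWithinAt
    have hb : ∀ s ∈ Set.uIcc 0 t,
        ‖deriv φ s - (s ^ n / n.factorial) • c‖ ≤ ε * |t| ^ n := by
      intro s hs
      refine (key s (hsub s hs).1).trans ?_
      have := (hsub s hs).2
      gcongr
    have := (convex_uIcc (0 : ℝ) t).norm_image_sub_le_of_norm_hasDerivWithin_le hder hb
      Set.left_mem_uIcc Set.right_mem_uIcc
    have hz : φ 0 = 0 := by simpa using h0 0 (by omega)
    simp only [hz] at this
    simpa [pow_succ, mul_assoc] using this

/-- The iterated partial derivative in `t` of a `C^n` map is jointly continuous. -/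
lemma continuousOn_iteratedDeriv_slice {E F : Type*}
    [NormedAddCommGroup E] [NormedSpace ℝ E] [NormedAddCommGroup F] [NormedSpace ℝ F]
    {U : Set (E × ℝ)} (hU : IsOpen U) (n : ℕ) (g : E × ℝ → F) (hg : ContDiffOn ℝ n g U) :
    ContinuousOn (fun p : E × ℝ => iteratedDeriv n (fun s => g (p.1, s)) p.2) U := by
  induction n generalizing g with
  | zero => simpa using hg.continuousOn
  | succ n ih =>
    have hD : ContDiffOn ℝ n (fun p => fderiv ℝ g p (0, 1)) U :=
      (hg.fderiv_of_isOpen hU (by push_cast; rfl)).clm_apply contDiffOn_const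
    refine (ih _ hD).congr ?_
    rintro ⟨x, t⟩ hp
    simp only [iteratedDeriv_succ']
    apply Filter.EventuallyEq.iteratedDeriv_eq
    have hcont : ContinuousAt (fun s : ℝ => (x, s)) t := by fun_prop
    filter_upwards [hcont.preimage_mem_nhds (hU.mem_nhds hp)] with s hs
    have h1 : HasFDerivAt g (fderiv ℝ g (x, s)) (x, s) :=
      ((hg.differentiableOn (by simp)).differentiableAt (hU.mem_nhds hs)).hasFDerivAt
    have h2 : HasDerivAt (fun s : ℝ => (x, s)) ((0 : E), (1 : ℝ)) s :=
      (hasDerivAt_const s x).prodMk (hasDerivAt_id s)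
    exact (h1.comp_hasDerivAt s h2).deriv

/-- Taylor expansion in `t` with parameter `x`, for a map whose lower-order `t`-derivatives
vanish on the slice `t = 0`. -/
lemma isLittleO_of_slice_deriv_zero {E F : Type*}
    [NormedAddCommGroup E] [NormedSpace ℝ E] [NormedAddCommGroup F] [NormedSpace ℝ F]
    {U : Set (E × ℝ)} (hU : IsOpen U) (n : ℕ) (g : E × ℝ → F) (hg : ContDiffOn ℝ n g U)
    {x₀ : E} (hx₀ : (x₀, (0 : ℝ)) ∈ U)
    (h0 : ∀ k < n, ∀ᶠ x in 𝓝 x₀, iteratedDeriv k (fun s => g (x, s)) 0 = 0) :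
    (fun p : E × ℝ => g p - (p.2 ^ n / n.factorial) •
      iteratedDeriv n (fun s => g (x₀, s)) 0) =o[𝓝 (x₀, (0 : ℝ))] fun p => p.2 ^ n := by
  rw [isLittleO_iff]
  intro ε hε
  have hc := (continuousOn_iteratedDeriv_slice hU n g hg).continuousAt (hU.mem_nhds hx₀)
  have h1 : ∀ᶠ p : E × ℝ in 𝓝 (x₀, (0 : ℝ)), p ∈ U ∧
      ‖iteratedDeriv n (fun s => g (p.1, s)) p.2 - iteratedDeriv n (fun s => g (x₀, s)) 0‖ ≤ ε := by
    filter_upwards [hU.mem_nhds hx₀, Metric.closedBall_mem_nhds _ hε |> hc.preimage_mem_nhds]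
      with p hp hp'
    exact ⟨hp, by simpa [dist_eq_norm] using hp'⟩
  have h2 : ∀ᶠ x in 𝓝 x₀, ∀ k < n, iteratedDeriv k (fun s => g (x, s)) 0 = 0 := by
    have := (Filter.eventually_all_finset (Finset.range n)
      (l := 𝓝 x₀) (p := fun k x => iteratedDeriv k (fun s => g (x, s)) 0 = 0)).2
      (fun k hk => h0 k (Finset.mem_range.1 hk))
    simpa using this
  obtain ⟨ρ₁, hρ₁, hb₁⟩ := Metric.eventually_nhds_iff.1 h1
  obtain ⟨ρ₂, hρ₂, hb₂⟩ := Metric.eventually_nhds_iff.1 h2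
  filter_upwards [Metric.ball_mem_nhds (x₀, (0 : ℝ)) (lt_min hρ₁ hρ₂)] with p hp
  obtain ⟨x, t⟩ := p
  rw [Metric.mem_ball, Prod.dist_eq, max_lt_iff] at hp
  obtain ⟨hx, ht⟩ := hp
  simp only [Real.dist_eq, sub_zero] at hx ht
  have hin : ∀ s ∈ Set.Ioo (-ρ₁) ρ₁, dist (x, s) (x₀, (0 : ℝ)) < ρ₁ := by
    intro s hs
    rw [Prod.dist_eq, max_lt_iff]
    exact ⟨hx.trans_le (min_le_left _ _), by simpa [Real.dist_eq] using abs_lt.mpr hs⟩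
  have hsm : ContDiffOn ℝ n (fun s => g (x, s)) (Set.Ioo (-ρ₁) ρ₁) :=
    hg.comp (f := fun s : ℝ => (x, s)) (by fun_prop) (fun s hs => (hb₁ (hin s hs)).1)
  have := norm_sub_taylor_le n (iteratedDeriv n (fun s => g (x₀, s)) 0) (fun s => g (x, s)) hsm
    (hb₂ (hx.trans_le (min_le_right _ _))) (fun s hs => (hb₁ (hin s hs)).2) t
    (abs_lt.mp (ht.trans_le (min_le_left _ _)))
  simpa using this

/-- Passage to the next order: if two `C^(r+1)` maps agreeing on the slice `t = 0`
have contact of order `r - 1` (i.e. `f₂ = f₁ + O(t^r)`) at every point `(x, 0)` near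
`(x₀, 0)` and the `r`-residual `(1/r!) ∂ᵣ/∂tᵣ (f₂ - f₁)(·, 0)` vanishes near `x₀`,
then `f₂ = f₁ + O(t^(r+1))` at `(x₀, 0)`. -/
theorem passage_to_next_order
    {E F : Type*}
    [NormedAddCommGroup E] [NormedSpace ℝ E] [CompleteSpace E]
    [NormedAddCommGroup F] [NormedSpace ℝ F] [CompleteSpace F]
    (U : Set (E × ℝ)) (hU : IsOpen U) (x₀ : E) (hx₀ : (x₀, (0 : ℝ)) ∈ U)
    (r : ℕ) (hr : 1 ≤ r)
    (f₁ f₂ : E × ℝ → F)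
    (hf₁ : ContDiffOn ℝ (r + 1) f₁ U) (hf₂ : ContDiffOn ℝ (r + 1) f₂ U)
    (hslice : ∀ x : E, (x, (0 : ℝ)) ∈ U → f₁ (x, 0) = f₂ (x, 0))
    (hcontact : ∀ᶠ x in 𝓝 x₀, ∃ δf : E × ℝ → F, ContinuousAt δf (x, 0) ∧
      ∀ᶠ p in 𝓝 (x, (0 : ℝ)), f₂ p - f₁ p = p.2 ^ r • δf p)
    (hres : ∀ᶠ x in 𝓝 x₀,
      iteratedDeriv r (fun t => f₂ (x, t) - f₁ (x, t)) 0 = 0) :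
    ∃ δ : E × ℝ → F, ContinuousAt δ (x₀, 0) ∧
      ∀ᶠ p in 𝓝 (x₀, (0 : ℝ)), f₂ p - f₁ p = p.2 ^ (r + 1) • δ p := by
  set g : E × ℝ → F := fun p => f₂ p - f₁ p with hgdef
  have hg : ContDiffOn ℝ ((r + 1 : ℕ)) g U := by
    push_cast
    exact hf₂.sub hf₁
  have hUx : ∀ᶠ x in 𝓝 x₀, (x, (0 : ℝ)) ∈ U :=
    ContinuousAt.preimage_mem_nhds (f := fun x : E => (x, (0 : ℝ))) (by fun_prop)
      (hU.mem_nhds hx₀)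
  -- The contact hypothesis forces the `t`-derivatives of order `< r` to vanish on the slice.
  have hlow : ∀ k < r, ∀ᶠ x in 𝓝 x₀, iteratedDeriv k (fun s => g (x, s)) 0 = 0 := by
    intro k
    induction k using Nat.strong_induction_on with
    | _ k ih =>
      intro hk
      have hprev : ∀ᶠ x in 𝓝 x₀, ∀ j < k, ∀ᶠ y in 𝓝 x,
          iteratedDeriv j (fun s => g (y, s)) 0 = 0 := by
        have := (Filter.eventually_all_finset (Finset.range k)
          (l := 𝓝 x₀) (p := fun j x => ∀ᶠ y in 𝓝 x, iteratedDeriv j (fun s => g (y, s)) 0 = 0)).2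
          (fun j hj => eventually_eventually_nhds.2
            (ih j (Finset.mem_range.1 hj) ((Finset.mem_range.1 hj).trans hk)))
        simpa using this
      filter_upwards [hprev, hUx, hcontact] with x hx hxU hδ
      obtain ⟨δf, hδc, hδ⟩ := hδ
      have hexp := isLittleO_of_slice_deriv_zero hU k g
        (hg.of_le (by exact_mod_cast (by omega : k ≤ r + 1))) hxU hx
      have hpath : Tendsto (fun t : ℝ => (x, t)) (𝓝[≠] 0) (𝓝 (x, 0)) :=
        (ContinuousAt.tendsto (f := fun t : ℝ => (x, t)) (x := 0)
          (by fun_prop)).mono_left nhdsWithin_le_nhds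
      set c := iteratedDeriv k (fun s => g (x, s)) 0
      have hlim := (hexp.comp_tendsto hpath).tendsto_inv_smul_nhds_zero
      have hlim2 : Tendsto (fun t : ℝ => t ^ (r - k) • δf (x, t)) (𝓝[≠] 0) (𝓝 0) := by
        have h1 : Tendsto (fun t : ℝ => t ^ (r - k)) (𝓝[≠] 0) (𝓝 0) := by
          have : Tendsto (fun t : ℝ => t ^ (r - k)) (𝓝 0) (𝓝 (0 ^ (r - k))) :=
            (continuous_pow (r - k)).tendsto 0
          rw [zero_pow (by omega)] at this
          exact this.mono_left nhdsWithin_le_nhds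
        simpa using h1.smul (hδc.tendsto.comp hpath)
      have hconst : Tendsto (fun _ : ℝ => ((k.factorial : ℝ)⁻¹) • c) (𝓝[≠] 0) (𝓝 0) := by
        have := hlim2.sub hlim
        rw [sub_zero] at this
        refine this.congr' ?_
        filter_upwards [hpath.eventually hδ, self_mem_nhdsWithin] with t ht ht0
        have ht0 : t ≠ 0 := ht0
        have e1 : t ^ r = t ^ k * t ^ (r - k) := by rw [← pow_add]; congr 1; omega
        have e2 : g (x, t) = (t ^ k * t ^ (r - k)) • δf (x, t) := by rw [← e1]; exact ht
        simp only [Function.comp, e2, smul_sub, smul_smul]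
        have hk0 : t ^ k ≠ 0 := pow_ne_zero _ ht0
        rw [inv_mul_cancel_left₀ hk0, div_eq_mul_inv, inv_mul_cancel_left₀ hk0]
        abel
      have hz := tendsto_nhds_unique hconst tendsto_const_nhds
      have hf : ((k.factorial : ℝ)⁻¹) ≠ 0 := by positivity
      exact (smul_eq_zero.1 hz.symm).resolve_left hf
  have hall : ∀ k < r + 1, ∀ᶠ x in 𝓝 x₀, iteratedDeriv k (fun s => g (x, s)) 0 = 0 := by
    intro k hk
    rcases Nat.lt_succ_iff_lt_or_eq.1 hk with h | rfl
    · exact hlow k h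
    · exact hres
  have hexp := isLittleO_of_slice_deriv_zero hU (r + 1) g hg hx₀ hall
  set c := iteratedDeriv (r + 1) (fun s => g (x₀, s)) 0
  classical
  refine ⟨fun p => if p.2 = 0 then (((r + 1).factorial : ℝ)⁻¹) • c
    else (p.2 ^ (r + 1))⁻¹ • g p, ?_, ?_⟩
  · have hlim := hexp.tendsto_inv_smul_nhds_zero
    have := hlim.add_const ((((r + 1).factorial : ℝ)⁻¹) • c)
    rw [zero_add] at this
    rw [ContinuousAt]
    simp only [if_true]
    refine this.congr fun p => ?_
    split_ifs with hp
    · simp [hp]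
    · have hk0 : p.2 ^ (r + 1) ≠ 0 := pow_ne_zero _ hp
      rw [smul_sub, smul_smul, div_eq_mul_inv, inv_mul_cancel_left₀ hk0]
      abel
  · filter_upwards [hU.mem_nhds hx₀] with p hp
    split_ifs with h
    · obtain ⟨x, t⟩ := p
      simp only at h
      subst h
      simp [hslice x hp]
    · rw [smul_smul, mul_inv_cancel₀ (pow_ne_zero _ h), one_smul]
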